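/- For every integer m ≥ 3 and every sufficiently large positive integer n, the Cayley graph of Z_n with connection set {±⌊n^{(m-i)/m}⌉ : i = 1, …, m} has diameter at most m·n^{1/m} + m. -/

import Mathlib

/-- Nearest integer to `n^((m-i)/m)`. -/
noncomputable def genStep (m n i : ℕ) : ℤ :=
  round ((n : ℝ) ^ (((m - i : ℕ) : ℝ) / (m : ℝ)))

/-- The Cayley graph `Λ_m(n)` of `ZMod n` with connection set
`{±⌊n^((m-i)/m)⌉ : i = 1, …, m}` (note `⌊n^0⌉ = 1`). -/
noncomputable def lamM (m n : ℕ) : SimpleGraph (ZMod n) :=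
  SimpleGraph.fromRel (fun x y =>
    ∃ i : ℕ, 1 ≤ i ∧ i ≤ m ∧ y = x + ((genStep m n i : ℤ) : ZMod n))

/-- Nearest-integer rounding of consecutive powers of `a` increases by a factor at most `a + 1`. -/
lemma round_pow_succ_le (a : ℝ) (ha : 2 ≤ a) (k : ℕ) :
    (round (a ^ (k + 1)) : ℝ) ≤ (a + 1) * (round (a ^ k) : ℝ) := by
  have upper := (abs_le.mp (abs_sub_round (a ^ (k + 1)))).1
  rcases Nat.eq_zero_or_pos k with rfl | hk
  · simp only [zero_add, pow_one, pow_zero, round_one, Int.cast_one] at *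
    linarith
  · have lower := (abs_le.mp (abs_sub_round (a ^ k))).2
    have hak : a ≤ a ^ k := le_self_pow₀ (by linarith) hk.ne'
    have hmul : (a + 1) * (a ^ k - 1 / 2) ≤ (a + 1) * (round (a ^ k) : ℝ) :=
      mul_le_mul_of_nonneg_left (by linarith) (by linarith)
    rw [pow_succ] at upper ⊢
    nlinarith

lemma genStep_sub (m n k : ℕ) (hk : k ≤ m) :
    genStep m n (m - k) = round (((n : ℝ) ^ ((1 : ℝ) / (m : ℝ))) ^ k) := by
  rw [genStep, Nat.sub_sub_self hk, ← Real.rpow_natCast, ← Real.rpow_mul (Nat.cast_nonneg n),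
    one_div_mul_eq_div]

/-- Adding `q` copies of a generator takes at most `q` steps in `lamM m n`. -/
lemma exists_walk_add_mul (m n i : ℕ) (h1 : 1 ≤ i) (hi : i ≤ m) (q : ℕ) (u : ZMod n) :
    ∃ p : (lamM m n).Walk u (u + q * ((genStep m n i : ℤ) : ZMod n)), p.length ≤ q := by
  induction q with
  | zero => exact ⟨SimpleGraph.Walk.nil.copy rfl (by simp), by simp⟩
  | succ q ih =>
    obtain ⟨p, hp⟩ := ih
    have hstep : u + ((q + 1 : ℕ) : ZMod n) * ((genStep m n i : ℤ) : ZMod n) =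
        u + q * ((genStep m n i : ℤ) : ZMod n) + ((genStep m n i : ℤ) : ZMod n) := by
      push_cast; ring
    by_cases h : u + q * ((genStep m n i : ℤ) : ZMod n) =
        u + q * ((genStep m n i : ℤ) : ZMod n) + ((genStep m n i : ℤ) : ZMod n)
    · exact ⟨p.copy rfl (h.trans hstep.symm), by simpa using hp.trans q.le_succ⟩
    · have hadj : (lamM m n).Adj (u + q * ((genStep m n i : ℤ) : ZMod n))
          (u + q * ((genStep m n i : ℤ) : ZMod n) + ((genStep m n i : ℤ) : ZMod n)) :=
        (SimpleGraph.fromRel_adj _ _ _).mpr ⟨h, Or.inl ⟨i, h1, hi, rfl⟩⟩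
      exact ⟨(p.concat hadj).copy rfl hstep.symm, by simpa using hp⟩

/-- Greedy expansion of `x` in the generators. -/
lemma exists_walk_add_of_lt_round_pow (m n : ℕ) (ha : 2 ≤ (n : ℝ) ^ ((1 : ℝ) / (m : ℝ)))
    (k : ℕ) (hk : k ≤ m) (x : ℕ)
    (hx : (x : ℤ) < round (((n : ℝ) ^ ((1 : ℝ) / (m : ℝ))) ^ k)) (u : ZMod n) :
    ∃ p : (lamM m n).Walk u (u + x),
      (p.length : ℝ) ≤ k * ((n : ℝ) ^ ((1 : ℝ) / (m : ℝ)) + 1) := by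
  induction k generalizing x u with
  | zero =>
    obtain rfl : x = 0 := by
      simp only [pow_zero, round_one] at hx
      omega
    exact ⟨SimpleGraph.Walk.nil.copy rfl (by simp), by simp⟩
  | succ k ih =>
    have hratio := round_pow_succ_le _ ha k
    have hgen := genStep_sub m n k (by omega)
    set a := (n : ℝ) ^ ((1 : ℝ) / (m : ℝ))
    have hxs : (x : ℝ) < (a + 1) * (round (a ^ k) : ℝ) :=
      lt_of_lt_of_le (by exact_mod_cast hx) hratio
    have hpos : (0 : ℝ) < (round (a ^ k) : ℝ) :=
      pos_of_mul_pos_right (lt_of_le_of_lt x.cast_nonneg hxs) (by linarith)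
    obtain ⟨s, hs⟩ := Int.eq_ofNat_of_zero_le (show 0 ≤ round (a ^ k) by exact_mod_cast hpos.le)
    rw [hs] at hgen ih hxs hpos
    simp only [Int.cast_natCast] at hxs hpos
    have hs0 : 0 < s := by exact_mod_cast hpos
    obtain ⟨p, hp⟩ := exists_walk_add_mul m n (m - k) (by omega) (Nat.sub_le m k) (x / s) u
    obtain ⟨r, hr⟩ := ih (by omega) (x % s) (by exact_mod_cast Nat.mod_lt x hs0)
      (u + ((x / s : ℕ) : ZMod n) * ((genStep m n (m - k) : ℤ) : ZMod n))
    have hend : u + ((x / s : ℕ) : ZMod n) * ((genStep m n (m - k) : ℤ) : ZMod n) +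
        ((x % s : ℕ) : ZMod n) = u + (x : ZMod n) := by
      conv_rhs => rw [← Nat.div_add_mod x s]
      rw [hgen]
      push_cast
      ring
    refine ⟨(p.append r).copy rfl hend, ?_⟩
    have hq : ((x / s : ℕ) : ℝ) ≤ a + 1 :=
      Nat.cast_div_le.trans ((div_le_iff₀ hpos).mpr hxs.le)
    have hp' : (p.length : ℝ) ≤ ((x / s : ℕ) : ℝ) := by exact_mod_cast hp
    simp only [SimpleGraph.Walk.length_copy, SimpleGraph.Walk.length_append]
    push_cast
    linarith

/-- For every `m ≥ 3` and every sufficiently large `n`, the diameter of `Λ_m(n)` is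
at most `m·n^(1/m) + m`. -/
theorem stmt_1 : ∀ m : ℕ, 3 ≤ m → ∃ N : ℕ, ∀ n : ℕ, N ≤ n →
    ((lamM m n).diam : ℝ) ≤ (m : ℝ) * (n : ℝ) ^ ((1 : ℝ) / (m : ℝ)) + (m : ℝ) := by
  intro m hm
  refine ⟨2 ^ m, fun n hn => ?_⟩
  have hm0 : m ≠ 0 := by omega
  have : NeZero n := ⟨(lt_of_lt_of_le (by positivity) hn).ne'⟩
  have ha : 2 ≤ (n : ℝ) ^ ((1 : ℝ) / (m : ℝ)) := by
    rw [one_div, Real.le_rpow_inv_iff_of_pos (by norm_num) n.cast_nonneg (by positivity),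
      Real.rpow_natCast]
    exact_mod_cast hn
  have hpow : ((n : ℝ) ^ ((1 : ℝ) / (m : ℝ))) ^ m = n := by
    rw [one_div, Real.rpow_inv_natCast_pow n.cast_nonneg hm0]
  obtain ⟨u, v, huv⟩ := (lamM m n).exists_dist_eq_diam
  obtain ⟨p, hp⟩ := exists_walk_add_of_lt_round_pow m n ha m le_rfl (v - u).val
    (by rw [hpow, round_natCast]; exact_mod_cast (v - u).val_lt) u
  have hv : u + (((v - u).val : ℕ) : ZMod n) = v := by simp
  have hdist : (lamM m n).dist u v ≤ p.length := by
    simpa using SimpleGraph.dist_le (p.copy rfl hv)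
  rw [← huv]
  calc ((lamM m n).dist u v : ℝ) ≤ p.length := by exact_mod_cast hdist
    _ ≤ _ := hp
    _ = _ := by ring
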